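/- Let U be an open subset of ℝ^{2n} with n ≥ 2, let ω be a smooth differential 2-form on U that is nondegenerate at every point, and let α and β be smooth 1-forms on U satisfying dω = α ∧ ω and dω = β ∧ ω. Then α = β. -/

import Mathlib

open scoped Topology

/-- The exterior derivative of a 2-form `ω` (given as a smooth family of continuous bilinear
forms) evaluated at `x` on the triple of vectors `(u, v, w)`:
`(dω)ₓ(u,v,w) = (D_u ω)(v,w) - (D_v ω)(u,w) + (D_w ω)(u,v)`. -/
noncomputable def extDeriv2 {m : ℕ}
    (ω : (Fin m → ℝ) → ((Fin m → ℝ) →L[ℝ] (Fin m → ℝ) →L[ℝ] ℝ))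
    (x u v w : Fin m → ℝ) : ℝ :=
  fderiv ℝ ω x u v w - fderiv ℝ ω x v u w + fderiv ℝ ω x w u v

/-- The wedge of a 1-form value `α` with a 2-form value `ω` evaluated on `(u,v,w)`:
`(α ∧ ω)(u,v,w) = α(u) ω(v,w) - α(v) ω(u,w) + α(w) ω(u,v)`. -/
noncomputable def wedge12 {m : ℕ} (α : (Fin m → ℝ) →L[ℝ] ℝ)
    (ω : (Fin m → ℝ) →L[ℝ] (Fin m → ℝ) →L[ℝ] ℝ)
    (u v w : Fin m → ℝ) : ℝ :=
  α u * ω v w - α v * ω u w + α w * ω u v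

/-!
If `α ∧ ω = 0` and `α ≠ 0`, contracting with a vector `u` such that `α u ≠ 0` gives
`α u • ω = α ∧ ω u`, so `ω` has rank at most `2`. The difference of two Lee forms is annihilated
by wedging with `ω`, hence vanishes wherever `ω` has rank greater than `2`.
-/

section Wedge

variable {K V : Type*} [AddCommGroup V]

theorem smul_apply_eq_of_wedge_eq_zero [CommRing K] [Module K V]
    {α : Module.Dual K V} {ω : LinearMap.BilinForm K V}
    (h : ∀ u v w, α u * ω v w - α v * ω u w + α w * ω u v = 0) (u v : V) :
    α u • ω v = α v • ω u - ω u v • α := by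
  ext w
  simp only [LinearMap.smul_apply, LinearMap.sub_apply, smul_eq_mul]
  linear_combination h u v w

theorem rank_le_two_of_wedge_eq_zero [Field K] [Module K V]
    {α : Module.Dual K V} {ω : LinearMap.BilinForm K V} (hα : α ≠ 0)
    (h : ∀ u v w, α u * ω v w - α v * ω u w + α w * ω u v = 0) :
    LinearMap.rank ω ≤ 2 := by
  obtain ⟨u, hu⟩ : ∃ u, α u ≠ 0 := DFunLike.ne_iff.mp hα
  have range_le : LinearMap.range ω ≤ Submodule.span K {ω u, α} := by
    rintro _ ⟨v, rfl⟩
    rw [← Submodule.smul_mem_iff _ hu, smul_apply_eq_of_wedge_eq_zero h]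
    exact sub_mem (Submodule.smul_mem _ _ (Submodule.mem_span_of_mem (by simp)))
      (Submodule.smul_mem _ _ (Submodule.mem_span_of_mem (by simp)))
  calc LinearMap.rank ω
      ≤ Module.rank K (Submodule.span K {ω u, α}) := Submodule.rank_mono range_le
    _ ≤ Cardinal.mk ({ω u, α} : Set (Module.Dual K V)) := rank_span_le _
    _ ≤ Cardinal.mk ({α} : Set (Module.Dual K V)) + 1 := Cardinal.mk_insert_le
    _ = 2 := by rw [Cardinal.mk_singleton, one_add_one_eq_two]

end Wedge

theorem rank_eq_rank_of_separatingLeft.{u} {K V : Type u} [CommRing K] [AddCommGroup V]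
    [Module K V] {ω : LinearMap.BilinForm K V} (hω : ω.SeparatingLeft) :
    LinearMap.rank ω = Module.rank K V :=
  rank_range_of_injective ω
    (LinearMap.ker_eq_bot.mp (LinearMap.separatingLeft_iff_ker_eq_bot.mp hω))

theorem wedge12_left_injective {m : ℕ} {ω : (Fin m → ℝ) →L[ℝ] (Fin m → ℝ) →L[ℝ] ℝ}
    (hω : 2 < ω.toLinearMap₁₂.rank) : Function.Injective (wedge12 · ω) := by
  intro α β h
  by_contra hne
  have coe_sub_ne_zero : (α - β : (Fin m → ℝ) →ₗ[ℝ] ℝ) ≠ 0 :=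
    sub_ne_zero.mpr (ContinuousLinearMap.coe_injective.ne hne)
  refine hω.not_ge (rank_le_two_of_wedge_eq_zero coe_sub_ne_zero fun u v w ↦ ?_)
  have huvw : wedge12 α ω u v w = wedge12 β ω u v w := congr_fun₃ h u v w
  simp only [wedge12] at huvw
  change (α u - β u) * ω v w - (α v - β v) * ω u w + (α w - β w) * ω u v = 0
  linear_combination huvw

theorem lee_form_unique_general
    {m : ℕ} (U : Set (Fin m → ℝ))
    (ω : (Fin m → ℝ) → ((Fin m → ℝ) →L[ℝ] (Fin m → ℝ) →L[ℝ] ℝ))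
    (_hω : ∀ x ∈ U, DifferentiableAt ℝ ω x)
    (_halt : ∀ x ∈ U, ∀ v, ω x v v = 0)
    (hrank : ∀ x ∈ U, 2 < (ω x).toLinearMap₁₂.rank)
    (α β : (Fin m → ℝ) → ((Fin m → ℝ) →L[ℝ] ℝ))
    (hdα : ∀ x ∈ U, ∀ u v w, extDeriv2 ω x u v w = wedge12 (α x) (ω x) u v w)
    (hdβ : ∀ x ∈ U, ∀ u v w, extDeriv2 ω x u v w = wedge12 (β x) (ω x) u v w) :
    Set.EqOn α β U := by
  intro x hx
  apply wedge12_left_injective (hrank x hx)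
  ext u v w
  exact (hdα x hx u v w).symm.trans (hdβ x hx u v w)

/-- Uniqueness of the Lee form in dimension `2n ≥ 4`: if `ω` is a smooth
nondegenerate (alternating) 2-form on an open set `U ⊆ ℝ^{2n}` and the smooth 1-forms `α`, `β`
both satisfy `dω = α ∧ ω` on `U`, then `α = β` on `U`. -/
theorem lee_form_unique
    {n : ℕ} (hn : 2 ≤ n)
    (U : Set (Fin (2 * n) → ℝ)) (hU : IsOpen U)
    (ω : (Fin (2 * n) → ℝ) → ((Fin (2 * n) → ℝ) →L[ℝ] (Fin (2 * n) → ℝ) →L[ℝ] ℝ))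
    (hω : ContDiffOn ℝ (⊤ : ℕ∞) ω U)
    (halt : ∀ x ∈ U, ∀ v, ω x v v = 0)
    (hnondeg : ∀ x ∈ U, ∀ v, (∀ w, ω x v w = 0) → v = 0)
    (α β : (Fin (2 * n) → ℝ) → ((Fin (2 * n) → ℝ) →L[ℝ] ℝ))
    (hα : ContDiffOn ℝ (⊤ : ℕ∞) α U) (hβ : ContDiffOn ℝ (⊤ : ℕ∞) β U)
    (hdα : ∀ x ∈ U, ∀ u v w, extDeriv2 ω x u v w = wedge12 (α x) (ω x) u v w)
    (hdβ : ∀ x ∈ U, ∀ u v w, extDeriv2 ω x u v w = wedge12 (β x) (ω x) u v w) :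
    Set.EqOn α β U := by
  refine lee_form_unique_general U ω
    (fun x hx ↦ (hω.contDiffAt (hU.mem_nhds hx)).differentiableAt (by simp))
    halt (fun x hx ↦ ?_) α β hdα hdβ
  have separatingLeft : (ω x).toLinearMap₁₂.SeparatingLeft := hnondeg x hx
  rw [rank_eq_rank_of_separatingLeft separatingLeft, rank_fin_fun]
  exact_mod_cast (by omega : 2 < 2 * n)
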